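/- arXiv:1811.04649 — 7 statements merged into one kernel-verified Lean document; each statement's English description precedes it below -/
import Mathlib

section
/- Let A be a unital associative algebra over ℂ, let θ be a ℂ-algebra automorphism of A with θ² = id, and let W be a simple left A-module such that the twisted module W∘θ is not isomorphic to W as an A-module. Then W, regarded as a module over the fixed subalgebra A^θ = {a ∈ A : θ(a) = a} by restriction of the action, is a simple A^θ-module. -/
/-- The fixed-point subalgebra `A^g = {a ∈ A : g(a) = a}` of a `ℂ`-algebra automorphism. -/
def fixedSubalgebra {A : Type*} [Ring A] [Algebra ℂ A] (g : A ≃ₐ[ℂ] A) : Subalgebra ℂ A :=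
  AlgHom.equalizer g.toAlgHom (AlgHom.id ℂ A)

/-!
Let a finite group `G` act on `A` so that no twist of `W` by some `g ≠ 1` is isomorphic to `W`. The
twists of `W` are then pairwise non-isomorphic simple modules, so, as in the Chinese remainder
theorem, for `w ≠ 0` and any `v` some `a : A` has `a • w = v` and `(g • a) • w = 0` for all `g ≠ 1`.
The trace `∑ g, g • a` is fixed by `G` and still maps `w` to `v`. For an involution `θ` the group is
`{1, θ}`.
-/

section SimpleModules

open LinearMap

variable {A X : Type*} [Ring A] [AddCommGroup X] [Module A X]

theorem nonempty_linearEquiv_of_ker_le_ker {M N : Type*} [AddCommGroup M] [Module A M]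
    [AddCommGroup N] [Module A N] [IsSimpleModule A M] [IsSimpleModule A N]
    {f : X →ₗ[A] M} {g : X →ₗ[A] N} (hf : f ≠ 0) (hg : g ≠ 0) (hfg : ker f ≤ ker g) :
    Nonempty (M ≃ₗ[A] N) := by
  let quotEquiv := f.quotKerEquivOfSurjective (surjective_of_ne_zero hf)
  let induced : M →ₗ[A] N := (ker f).liftQ g hfg ∘ₗ quotEquiv.symm
  have induced_apply (x : X) : induced (f x) = g x := by
    have : quotEquiv.symm (f x) = Submodule.Quotient.mk x := quotEquiv.symm_apply_eq.mpr rfl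
    simp [induced, this]
  have induced_ne_zero : induced ≠ 0 := fun h ↦
    hg <| LinearMap.ext fun x ↦ by simp [← induced_apply, h]
  exact ⟨.ofBijective induced (bijective_of_ne_zero induced_ne_zero)⟩

theorem map_finsetInf_ker_eq_top {ι : Type*} {M : ι → Type*} [∀ i, AddCommGroup (M i)]
    [∀ i, Module A (M i)] [∀ i, IsSimpleModule A (M i)]
    (hM : Pairwise fun i j ↦ IsEmpty (M i ≃ₗ[A] M j))
    {f : ∀ i, X →ₗ[A] M i} (hf : ∀ i, f i ≠ 0) {s : Finset ι} {i : ι} (hi : i ∉ s) :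
    (s.inf fun j ↦ ker (f j)).map (f i) = ⊤ := by
  classical
  induction s using Finset.induction generalizing i with
  | empty =>
    rw [Finset.inf_empty, Submodule.map_top, range_eq_top]
    exact surjective_of_ne_zero (hf i)
  | insert k s hk ih =>
    obtain ⟨hik, his⟩ : i ≠ k ∧ i ∉ s := by simpa using hi
    set N := s.inf fun j ↦ ker (f j)
    have restrict_ne_zero {j : ι} (hj : j ∉ s) : (f j).domRestrict N ≠ 0 := by
      have := IsSimpleModule.nontrivial A (M j)
      rw [← range_eq_bot.ne, range_domRestrict, ih hj]
      exact top_ne_bot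
    rw [Finset.inf_insert]
    refine (eq_bot_or_eq_top _).resolve_left fun hbot ↦ ?_
    have ker_le_ker : ker ((f k).domRestrict N) ≤ ker ((f i).domRestrict N) := fun x hx ↦
      le_ker_iff_map.mpr hbot ⟨hx, x.2⟩
    obtain ⟨e⟩ :=
      nonempty_linearEquiv_of_ker_le_ker (restrict_ne_zero hk) (restrict_ne_zero his) ker_le_ker
    exact (hM hik.symm).false e

theorem exists_smul_eq_and_forall_ne_smul_eq_zero {ι : Type*} [Finite ι] {M : ι → Type*}
    [∀ i, AddCommGroup (M i)] [∀ i, Module A (M i)] [∀ i, IsSimpleModule A (M i)]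
    (hM : Pairwise fun i j ↦ IsEmpty (M i ≃ₗ[A] M j))
    {m : ∀ i, M i} (hm : ∀ i, m i ≠ 0) (i : ι) (v : M i) :
    ∃ a : A, a • m i = v ∧ ∀ j ≠ i, a • m j = 0 := by
  classical
  have := Fintype.ofFinite ι
  have span_ne_zero (j : ι) : toSpanSingleton A (M j) (m j) ≠ 0 := by
    rw [Ne, toSpanSingleton_eq_zero_iff]
    exact hm j
  have hv : v ∈ ((Finset.univ.erase i).inf fun j ↦ ker (toSpanSingleton A (M j) (m j))).map
      (toSpanSingleton A (M i) (m i)) := by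
    rw [map_finsetInf_ker_eq_top hM span_ne_zero (Finset.notMem_erase i _)]
    exact Submodule.mem_top
  obtain ⟨a, ha, rfl⟩ := hv
  refine ⟨a, rfl, fun j hj ↦ ?_⟩
  simpa using (Submodule.mem_finsetInf.mp ha) j (by simpa using hj)

end SimpleModules

/-- The twist `W ∘ σ` of an `A`-module `W` by a ring endomorphism `σ` of `A`: the additive group `W`
on which `a : A` acts as `σ a`. It is a type synonym, so that both actions of `A` on `W` are
available. -/
def TwistedModule {A : Type*} [Ring A] (_σ : A →+* A) (W : Type*) : Type _ := W

namespace TwistedModule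

variable {A : Type*} [Ring A] {W : Type*} [AddCommGroup W] [Module A W]

instance (σ : A →+* A) : AddCommGroup (TwistedModule σ W) := inferInstanceAs (AddCommGroup W)

instance (σ : A →+* A) : Module A (TwistedModule σ W) := Module.compHom W σ

/-- The identity of `W`, viewed as a `σ`-semilinear map from the twist of `W` by `σ` to `W`. -/
def toUntwisted (σ : A →+* A) : TwistedModule σ W →ₛₗ[σ] W where
  toFun w := w
  map_add' _ _ := rfl
  map_smul' _ _ := rfl

instance isSimpleModule [IsSimpleModule A W] (σ : A →+* A) [RingHomSurjective σ] :
    IsSimpleModule A (TwistedModule σ W) :=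
  ((toUntwisted σ).isSimpleModule_iff_of_bijective Function.bijective_id).mpr ‹_›

/-- An isomorphism `W ∘ σ ≅ W ∘ τ` twists by a right inverse `ρ` of `τ` to `W ∘ (σ ∘ ρ) ≅ W`. -/
def untwistRight {σ τ ρ : A →+* A} (hτρ : τ.comp ρ = .id A)
    (e : TwistedModule σ W ≃ₗ[A] TwistedModule τ W) : TwistedModule (σ.comp ρ) W ≃ₗ[A] W where
  __ := e.toAddEquiv
  map_smul' a w := (e.map_smul (ρ a) w).trans <|
    congrArg (· • toUntwisted τ (e w)) (RingHom.congr_fun hτρ a)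

end TwistedModule

section FiniteGroup

variable {A G W : Type*} [Ring A] [Group G] [MulSemiringAction G A] [AddCommGroup W] [Module A W]

open MulSemiringAction (toRingHom)

instance toRingHom_ringHomSurjective (g : G) : RingHomSurjective (toRingHom G A g) :=
  ⟨MulAction.surjective g⟩

theorem pairwise_isEmpty_linearEquiv_twistedModule
    (hW : ∀ g : G, g ≠ 1 → IsEmpty (TwistedModule (toRingHom G A g) W ≃ₗ[A] W)) :
    Pairwise fun g h : G ↦ IsEmpty
      (TwistedModule (toRingHom G A g) W ≃ₗ[A] TwistedModule (toRingHom G A h) W) := by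
  refine fun g h hgh ↦ ⟨fun e ↦ ?_⟩
  have right_inv : (toRingHom G A h).comp (toRingHom G A h⁻¹) = .id A :=
    RingHom.ext (smul_inv_smul h)
  have comp_eq : (toRingHom G A g).comp (toRingHom G A h⁻¹) = toRingHom G A (g * h⁻¹) :=
    RingHom.ext fun a ↦ (mul_smul g h⁻¹ a).symm
  exact (hW (g * h⁻¹) (mul_inv_eq_one.not.mpr hgh)).false
    (comp_eq ▸ TwistedModule.untwistRight right_inv e)

theorem exists_smul_eq_and_forall_ne_one_smul_smul_eq_zero [Finite G] [IsSimpleModule A W]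
    (hW : ∀ g : G, g ≠ 1 → IsEmpty (TwistedModule (toRingHom G A g) W ≃ₗ[A] W))
    {w : W} (hw : w ≠ 0) (v : W) :
    ∃ a : A, a • w = v ∧ ∀ g : G, g ≠ 1 → (g • a) • w = 0 := by
  obtain ⟨a, hav, ha⟩ := exists_smul_eq_and_forall_ne_smul_eq_zero
    (pairwise_isEmpty_linearEquiv_twistedModule hW) (m := fun _ ↦ w) (fun _ ↦ hw) 1 v
  have one_smul_smul : ((1 : G) • a) • w = v := hav
  exact ⟨a, by rwa [one_smul] at one_smul_smul, ha⟩

theorem sum_smul_mem_fixedPoints_subalgebra (R : Type*) [CommSemiring R] [Algebra R A]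
    [SMulCommClass G R A] [Fintype G] (a : A) :
    ∑ g : G, g • a ∈ FixedPoints.subalgebra R A G := fun h ↦ calc
  h • ∑ g : G, g • a = ∑ g : G, (h * g) • a := by simp only [Finset.smul_sum, mul_smul]
  _ = ∑ g : G, g • a := Equiv.sum_comp (Equiv.mulLeft h) fun g ↦ g • a

theorem simple_over_fixed_subalgebra_of_order_two_general (R : Type*) [CommRing R]
    [Algebra R A] [SMulCommClass G R A] [Finite G] [IsSimpleModule A W]
    (hW : ∀ g : G, g ≠ 1 → IsEmpty (TwistedModule (toRingHom G A g) W ≃ₗ[A] W)) :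
    IsSimpleModule (FixedPoints.subalgebra R A G) W := by
  have := Fintype.ofFinite G
  refine isSimpleModule_iff_toSpanSingleton_surjective.mpr
    ⟨IsSimpleModule.nontrivial A W, fun w hw v ↦ ?_⟩
  obtain ⟨a, hav, ha⟩ := exists_smul_eq_and_forall_ne_one_smul_smul_eq_zero hW hw v
  refine ⟨⟨∑ g : G, g • a, sum_smul_mem_fixedPoints_subalgebra R a⟩, ?_⟩
  calc (∑ g : G, g • a) • w = ∑ g : G, (g • a) • w := Finset.sum_smul
    _ = ((1 : G) • a) • w := Fintype.sum_eq_single 1 ha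
    _ = v := by rw [one_smul, hav]

end FiniteGroup

theorem fixedSubalgebra_eq_fixedPoints_zpowers {A : Type*} [Ring A] [Algebra ℂ A]
    (θ : A ≃ₐ[ℂ] A) :
    fixedSubalgebra θ = FixedPoints.subalgebra ℂ A (Subgroup.zpowers θ) := by
  ext a
  have stabilizer_iff : Subgroup.zpowers θ ≤ MulAction.stabilizer (A ≃ₐ[ℂ] A) a ↔ θ a = a :=
    Subgroup.zpowers_le
  exact stabilizer_iff.symm.trans ⟨fun h g ↦ h g.2, fun h g hg ↦ h ⟨g, hg⟩⟩

theorem eq_one_or_eq_of_mem_zpowers_of_sq_eq_one {G : Type*} [Group G] {g h : G}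
    (hg : g ^ 2 = 1) (hh : h ∈ Subgroup.zpowers g) : h = 1 ∨ h = g := by
  obtain ⟨k, rfl⟩ := hh
  have zpow_two_mul (n : ℤ) : g ^ (2 * n) = 1 := by
    rw [zpow_mul, zpow_ofNat, hg, one_zpow]
  obtain ⟨n, rfl | rfl⟩ := k.even_or_odd'
  · exact .inl (zpow_two_mul n)
  · exact .inr (by simp only [zpow_add_one, zpow_two_mul, one_mul])

/-- Let `θ` be an order-two `ℂ`-algebra automorphism of `A` and `W` a
simple `A`-module with `W ∘ θ ≇ W`. Then `W` is simple over the fixed subalgebra `A^θ`. -/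
theorem simple_over_fixed_subalgebra_of_order_two
    (A : Type*) [Ring A] [Algebra ℂ A]
    (θ : A ≃ₐ[ℂ] A) (hθ : θ ^ 2 = 1)
    (W : Type*) [AddCommGroup W] [Module A W]
    (hW : IsSimpleModule A W)
    (hnoniso : ¬ ∃ f : W ≃+ W, ∀ (a : A) (w : W), f (θ a • w) = a • f w) :
    IsSimpleModule (fixedSubalgebra θ) W := by
  have : Finite (Subgroup.zpowers θ) :=
    (isOfFinOrder_iff_pow_eq_one.mpr ⟨2, two_pos, hθ⟩).finite_zpowers
  rw [fixedSubalgebra_eq_fixedPoints_zpowers]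
  refine simple_over_fixed_subalgebra_of_order_two_general ℂ fun ⟨g, hg⟩ hg1 ↦ ⟨fun e ↦ ?_⟩
  obtain rfl | rfl := eq_one_or_eq_of_mem_zpowers_of_sq_eq_one hθ hg
  · exact hg1 rfl
  · exact hnoniso ⟨e.toAddEquiv, map_smul e⟩
end

section
/- Let A be a unital associative algebra over ℂ, let p ≥ 1 be an integer, and let g be a ℂ-algebra automorphism of A with g^p = id. Let W be a simple left A-module of at most countable complex dimension, and suppose W is isomorphic to the twisted module W∘g as an A-module. Then there exists a ℂ-linear bijection Φ : W → W satisfying Φ(a·w) = g(a)·Φ(w) for all a ∈ A, w ∈ W, and Φ^p = id_W. -/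
/-!
An intertwiner `F : W → W ∘ g` is automatically `ℂ`-linear, and since `g ^ p = 1` its `p`-th power
commutes with `A`. By Schur's lemma `End_A W` is a division algebra, and evaluation at a nonzero
vector embeds it into `W`. A transcendental element would embed `ℂ(X)` into `End_A W`, hence into
`W`, although the family `(X - c)⁻¹`, `c ∈ ℂ`, is linearly independent and uncountable. So
`End_A W` is algebraic over `ℂ`, thus equal to `ℂ`, and `F ^ p` is a nonzero scalar `c`. Dividing
`F` by a `p`-th root of `c` gives `Φ`.
-/

open Cardinal
open Polynomial (aeval)
open scoped Polynomial nonZeroDivisors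

universe u v

theorem mk_le_rank_ratFunc (K : Type u) [Field K] : #K ≤ Module.rank K (RatFunc K) :=
  RatFunc.transcendental_X.linearIndependent_sub_inv.cardinal_le_rank

section DivisionAlgebra

variable {K : Type u} {D : Type v} [Field K] [DivisionRing D] [Algebra K D]

theorem isUnit_algebraMap_end_aEval_of_transcendental {x : D} (hx : Transcendental K x)
    (q : K[X]⁰) : IsUnit (algebraMap K[X] (Module.End K[X] (Module.AEval K D x)) q) := by
  have hq : aeval x (q : K[X]) ≠ 0 :=
    fun h ↦ nonZeroDivisors.coe_ne_zero q (transcendental_iff.1 hx _ h)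
  rw [Module.End.isUnit_iff]
  exact (Module.AEval.of K D x).bijective.comp
    ((mulLeft_bijective₀ _ hq).comp (Module.AEval.of K D x).symm.bijective)

-- `RatFunc.liftAlgHom` needs a commutative codomain, so `K(X)` is embedded as a localized module.
theorem exists_injective_ratFunc_linearMap_of_transcendental {x : D} (hx : Transcendental K x) :
    ∃ φ : RatFunc K →ₗ[K] D, Function.Injective φ := by
  let aevalₗ : K[X] →ₗ[K[X]] Module.AEval K D x :=
    LinearMap.toSpanSingleton K[X] _ (Module.AEval.of K D x 1)
  let ψ : RatFunc K →ₗ[K[X]] Module.AEval K D x :=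
    IsLocalizedModule.lift K[X]⁰ (Algebra.linearMap K[X] (RatFunc K)) aevalₗ
      (isUnit_algebraMap_end_aEval_of_transcendental hx)
  have ψ_algebraMap (q : K[X]) :
      ψ (algebraMap K[X] (RatFunc K) q) = Module.AEval.of K D x (aeval x q) := by
    calc ψ (algebraMap K[X] (RatFunc K) q) = aevalₗ q :=
          IsLocalizedModule.lift_apply K[X]⁰ (Algebra.linearMap K[X] (RatFunc K)) aevalₗ
            (isUnit_algebraMap_end_aEval_of_transcendental hx) q
      _ = Module.AEval.of K D x (aeval x q • 1) := rfl
      _ = Module.AEval.of K D x (aeval x q) := by rw [smul_eq_mul, mul_one]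
  have ψ_injective : Function.Injective ψ := by
    refine IsLocalizedModule.injective_of_map_zero K[X]⁰ (Algebra.linearMap K[X] (RatFunc K))
      fun {q} hq ↦ ?_
    have haeval : aeval x q = 0 := by simpa [ψ_algebraMap] using hq
    rw [transcendental_iff.1 hx q haeval, map_zero]
  exact ⟨(Module.AEval.of K D x).symm.toLinearMap ∘ₗ ψ.restrictScalars K,
    (Module.AEval.of K D x).symm.injective.comp ψ_injective⟩

theorem isAlgebraic_of_lift_rank_lt (hD : lift.{u} (Module.rank K D) < lift.{v} #K) :
    Algebra.IsAlgebraic K D := by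
  refine ⟨fun x ↦ by_contra fun hx ↦ hD.not_ge ?_⟩
  obtain ⟨φ, hφ⟩ := exists_injective_ratFunc_linearMap_of_transcendental hx
  calc lift.{v} #K ≤ lift.{v} (Module.rank K (RatFunc K)) := lift_le.2 (mk_le_rank_ratFunc K)
    _ ≤ lift.{u} (Module.rank K D) := φ.lift_rank_le_of_injective hφ

end DivisionAlgebra

section SimpleModule

variable (K : Type u) (A : Type*) (W : Type v) [Field K] [Ring A] [Algebra K A]
  [AddCommGroup W] [Module K W] [Module A W] [IsScalarTower K A W] [IsSimpleModule A W]

theorem rank_end_le_rank_of_isSimpleModule :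
    Module.rank K (Module.End A W) ≤ Module.rank K W := by
  have := IsSimpleModule.nontrivial A W
  obtain ⟨w, hw⟩ := exists_ne (0 : W)
  refine (LinearMap.applyₗ' K w : Module.End A W →ₗ[K] W).rank_le_of_injective ?_
  refine (injective_iff_map_eq_zero _).2 fun T hT ↦ by_contra fun hT0 ↦ hw ?_
  exact LinearMap.injective_of_ne_zero hT0 (hT.trans (map_zero T).symm)

theorem algebraMap_end_bijective_of_lift_rank_lt [IsAlgClosed K]
    (hW : lift.{u} (Module.rank K W) < lift.{v} #K) :
    Function.Bijective (algebraMap K (Module.End A W)) := by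
  classical
  have : Algebra.IsAlgebraic K (Module.End A W) := isAlgebraic_of_lift_rank_lt <|
    (lift_le.2 (rank_end_le_rank_of_isSimpleModule K A W)).trans_lt hW
  exact IsAlgClosed.algebraMap_bijective_of_isIntegral

end SimpleModule

theorem exists_ne_zero_smul_pow_eq_one {K B : Type*} [Field K] [IsAlgClosed K] [Ring B]
    [Nontrivial B] [Algebra K B] {p : ℕ} (hp : 0 < p) {b : B} (hb : IsUnit b) {c : K}
    (hbc : b ^ p = algebraMap K B c) : ∃ d : K, d ≠ 0 ∧ (d • b) ^ p = 1 := by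
  have hc : c ≠ 0 := by
    rintro rfl
    exact (hb.pow p).ne_zero (hbc.trans (map_zero _))
  obtain ⟨d, hd⟩ := IsAlgClosed.exists_pow_nat_eq c⁻¹ hp
  refine ⟨d, ?_, ?_⟩
  · rintro rfl
    exact inv_ne_zero hc (hd.symm.trans (zero_pow hp.ne'))
  · rw [smul_pow, hd, hbc, Algebra.smul_def, ← map_mul, inv_mul_cancel₀ hc, map_one]

section Twist

variable {K A W : Type*} [Field K] [Ring A] [Algebra K A]
  [AddCommGroup W] [Module K W] [Module A W]

/-- `Φ` is an `A`-module homomorphism from `W` to the twisted module `W ∘ g`. The twisted module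
itself is not constructed: `Φ` is a `K`-linear endomorphism of `W`, so that its powers make sense,
subject to an equivariance condition. -/
def IsTwistIntertwiner (g : A ≃ₐ[K] A) (Φ : Module.End K W) : Prop :=
  ∀ (a : A) (w : W), Φ (a • w) = g a • Φ w

theorem exists_isTwistIntertwiner_coe_eq [IsScalarTower K A W] {g : A ≃ₐ[K] A} (f : W →+ W)
    (hf : ∀ (a : A) (w : W), f (a • w) = g a • f w) :
    ∃ F : Module.End K W, IsTwistIntertwiner g F ∧ ⇑F = f := by
  have map_smul (c : K) (w : W) : f (c • w) = c • f w := by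
    simpa using hf (algebraMap K A c) w
  exact ⟨{ f with map_smul' := map_smul }, hf, rfl⟩

namespace IsTwistIntertwiner

variable {g : A ≃ₐ[K] A} {Φ : Module.End K W}

theorem smul [IsScalarTower K A W] (hΦ : IsTwistIntertwiner g Φ) (d : K) :
    IsTwistIntertwiner g (d • Φ) := by
  have : SMulCommClass K A W := IsScalarTower.to_smulCommClass
  intro a w
  rw [LinearMap.smul_apply, LinearMap.smul_apply, hΦ, smul_comm]

theorem pow (hΦ : IsTwistIntertwiner g Φ) (n : ℕ) : IsTwistIntertwiner (g ^ n) (Φ ^ n) := by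
  induction n with
  | zero => exact fun _ _ ↦ rfl
  | succ n ih =>
    intro a w
    rw [pow_succ', pow_succ', Module.End.mul_apply, Module.End.mul_apply, ih, hΦ,
      AlgEquiv.mul_apply]

theorem exists_eq_algebraMap [IsScalarTower K A W]
    (hSchur : Function.Surjective (algebraMap K (Module.End A W)))
    (hΦ : IsTwistIntertwiner (1 : A ≃ₐ[K] A) Φ) :
    ∃ c : K, Φ = algebraMap K (Module.End K W) c := by
  let T : Module.End A W := { Φ with map_smul' := hΦ }
  obtain ⟨c, hc⟩ := hSchur T
  exact ⟨c, LinearMap.ext fun w ↦ (LinearMap.congr_fun hc w).symm⟩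

end IsTwistIntertwiner

end Twist

theorem exists_linear_period_p_twist_intertwiner_general
    {K : Type u} {A : Type*} {W : Type v} [Field K] [IsAlgClosed K] [Ring A] [Algebra K A]
    [AddCommGroup W] [Module K W] [Module A W] [IsScalarTower K A W] [IsSimpleModule A W]
    (hW : lift.{u} (Module.rank K W) < lift.{v} #K)
    {p : ℕ} (hp : 0 < p) {g : A ≃ₐ[K] A} (hg : g ^ p = 1)
    (hiso : ∃ f : W ≃+ W, ∀ (a : A) (w : W), f (a • w) = g a • f w) :
    ∃ Φ : Module.End K W, Function.Bijective Φ ∧ IsTwistIntertwiner g Φ ∧ Φ ^ p = 1 := by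
  have := IsSimpleModule.nontrivial A W
  obtain ⟨f, hf⟩ := hiso
  obtain ⟨F, hF, hFf⟩ := exists_isTwistIntertwiner_coe_eq f.toAddMonoidHom hf
  have F_isUnit : IsUnit F := (Module.End.isUnit_iff F).2 (hFf ▸ f.bijective)
  obtain ⟨c, hc⟩ := IsTwistIntertwiner.exists_eq_algebraMap
    (algebraMap_end_bijective_of_lift_rank_lt K A W hW).surjective (hg ▸ hF.pow p)
  obtain ⟨d, hd, hdF⟩ := exists_ne_zero_smul_pow_eq_one hp F_isUnit hc
  have dF_isUnit : IsUnit (d • F) := F_isUnit.smul (Units.mk0 d hd)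
  exact ⟨d • F, (Module.End.isUnit_iff _).1 dF_isUnit, hF.smul d, hdF⟩

/-- If `g^p = id`, `W` is a simple `A`-module of at most countable complex
dimension and `W ≅ W ∘ g`, then there is a `ℂ`-linear bijection `Φ : W → W` with
`Φ(a·w) = g(a)·Φ(w)` and `Φ^p = id`. -/
theorem exists_linear_period_p_twist_intertwiner
    (A : Type*) [Ring A] [Algebra ℂ A]
    (p : ℕ) (hp : 1 ≤ p)
    (g : A ≃ₐ[ℂ] A) (hg : g ^ p = 1)
    (W : Type*) [AddCommGroup W] [Module ℂ W] [Module A W] [IsScalarTower ℂ A W]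
    (hW : IsSimpleModule A W)
    (hcount : Module.rank ℂ W ≤ Cardinal.aleph0)
    (hiso : ∃ f : W ≃+ W, ∀ (a : A) (w : W), f (a • w) = g a • f w) :
    ∃ Φ : W →ₗ[ℂ] W, Function.Bijective Φ ∧
      (∀ (a : A) (w : W), Φ (a • w) = g a • Φ w) ∧
      Φ ^ p = (1 : W →ₗ[ℂ] W) :=
  exists_linear_period_p_twist_intertwiner_general
    (by simpa using hcount.trans_lt aleph0_lt_continuum) hp hg hiso
end

section
/- Let A be a unital associative algebra over ℂ, p ≥ 1, and g a ℂ-algebra automorphism of A with g^p = id. Let W be a simple left A-module and suppose Φ : W → W is a ℂ-linear bijection with Φ(a·w) = g(a)·Φ(w) for all a ∈ A, w ∈ W, and Φ^p = id_W. Let ζ = e^{2πi/p}, and for 0 ≤ j ≤ p−1 set W^j = ker(Φ − ζ^j·id_W) and A^i = {a ∈ A : g(a) = ζ^i·a}. Then: (1) W = W^0 ⊕ W^1 ⊕ ⋯ ⊕ W^{p−1}; (2) A^i·W^j ⊆ W^{(i+j) mod p} for all i, j; and (3) every nonzero W^j is a simple module over the fixed subalgebra A^g = A^0 = {a ∈ A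 : g(a) = a}. -/
/-- The primitive `p`-th root of unity `ζ = e^{2πi/p}`. -/
noncomputable def primRoot (p : ℕ) : ℂ :=
  Complex.exp (2 * Real.pi * Complex.I / p)

/-- The eigenspace `W^j = ker(Φ − ζ^j·id)` of a `ℂ`-linear map `Φ`, for `ζ = e^{2πi/p}`. -/
noncomputable def eigenSp {W : Type*} [AddCommGroup W] [Module ℂ W]
    (Φ : W →ₗ[ℂ] W) (p j : ℕ) : Submodule ℂ W :=
  LinearMap.ker (Φ - (primRoot p) ^ j • (1 : W →ₗ[ℂ] W))

/-!
`Φ` is annihilated by `X ^ p - 1`, which splits into distinct linear factors, so `W` is the direct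
sum of the eigenspaces of `Φ`. For simplicity over the fixed subalgebra, let `s ≠ 0` and `w` lie in
one eigenspace. Simplicity of `W` gives `a` with `a • s = w`, and applying `Φ` shows that every
`g ^ k` carries `a` to another element sending `s` to `w`. Hence the average of `a` over the powers
of `g` still sends `s` to `w`, and this average is fixed by `g`.
-/

open Module.End Polynomial
open scoped Function

section Diagonalization

theorem ker_aeval_prod_eq_iSup_ker_aeval {R M ι : Type*} [CommRing R] [AddCommGroup M] [Module R M]
    (f : Module.End R M) (s : Finset ι) {q : ι → R[X]}
    (hq : (s : Set ι).Pairwise (IsCoprime on q)) :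
    LinearMap.ker (aeval f (∏ i ∈ s, q i)) = ⨆ i ∈ s, LinearMap.ker (aeval f (q i)) := by
  classical
  induction s using Finset.induction_on with
  | empty => simp [one_eq_id]
  | insert i s hi ih =>
    have hcoprime : IsCoprime (q i) (∏ j ∈ s, q j) := IsCoprime.prod_right fun j hj =>
      hq (by simp) (by simp [hj]) (ne_of_mem_of_not_mem hj hi).symm
    have hker := ih (hq.mono (by simp))
    rw [Finset.prod_insert hi, Finset.iSup_insert, ← hker,
      sup_ker_aeval_eq_ker_aeval_mul_of_coprime f hcoprime]

variable {K W ι : Type*} [Field K] [AddCommGroup W] [Module K W] {f : Module.End K W}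

theorem isInternal_eigenspace_of_aeval_prod_X_sub_C_eq_zero [Fintype ι] [DecidableEq ι] {μ : ι → K}
    (hμ : Function.Injective μ) (hf : aeval f (∏ i, (X - C (μ i))) = 0) :
    DirectSum.IsInternal fun i => f.eigenspace (μ i) := by
  rw [DirectSum.isInternal_submodule_iff_iSupIndep_and_iSup_eq_top]
  refine ⟨(eigenspaces_iSupIndep f).comp hμ, ?_⟩
  have hker := ker_aeval_prod_eq_iSup_ker_aeval f Finset.univ
    ((pairwise_coprime_X_sub_C hμ).set_pairwise _)
  rw [hf, LinearMap.ker_zero] at hker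
  simpa [eigenspace_def, Algebra.algebraMap_eq_smul_one] using hker.symm

theorem isInternal_eigenspace_pow_of_pow_eq_one {p : ℕ} (hp : 0 < p) {ζ : K}
    (hζ : IsPrimitiveRoot ζ p) (hf : f ^ p = 1) :
    DirectSum.IsInternal fun j : Fin p => f.eigenspace (ζ ^ (j : ℕ)) := by
  have hprod : (X ^ p - 1 : K[X]) = ∏ j : Fin p, (X - C (ζ ^ (j : ℕ))) := by
    simpa [Finset.prod_range] using X_pow_sub_C_eq_prod hζ hp (one_pow p)
  have hinj : Function.Injective fun j : Fin p => ζ ^ (j : ℕ) :=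
    fun i j hij => Fin.ext (hζ.pow_inj i.isLt j.isLt hij)
  refine isInternal_eigenspace_of_aeval_prod_X_sub_C_eq_zero hinj ?_
  rw [← hprod, map_sub, map_pow, aeval_X, map_one, hf, sub_self]

end Diagonalization

theorem apply_sum_range_pow_apply_of_pow_eq_one {R M : Type*} [Semiring R] [AddCommMonoid M]
    [Module R M] {f : Module.End R M} {p : ℕ} (hf : f ^ p = 1) (x : M) :
    f (∑ k ∈ Finset.range p, (f ^ k) x) = ∑ k ∈ Finset.range p, (f ^ k) x := by
  cases p with
  | zero => simp
  | succ n =>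
    rw [map_sum, Finset.sum_range_succ, Finset.sum_range_succ']
    simp only [← mul_apply, ← pow_succ', hf, pow_zero]

section TwistedIntertwiner

variable {K A W : Type*} [CommRing K] [Ring A] [Algebra K A]
  [AddCommGroup W] [Module K W] [Module A W] [IsScalarTower K A W]
  {g : Module.End K A} {Φ : Module.End K W}

theorem smul_mem_eigenspace_mul (hΦ : ∀ (a : A) (w : W), Φ (a • w) = g a • Φ w)
    {c μ : K} {a : A} (ha : a ∈ g.eigenspace c) {w : W} (hw : w ∈ Φ.eigenspace μ) :
    a • w ∈ Φ.eigenspace (c * μ) := by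
  rw [mem_eigenspace_iff] at ha hw ⊢
  rw [hΦ, ha, hw, smul_assoc, smul_comm a, smul_smul]

variable {μ : K} {s w : W}

theorem pow_apply_smul_eq_of_mem_eigenspace (hΦ : ∀ (a : A) (w : W), Φ (a • w) = g a • Φ w)
    (hμ : IsUnit μ) (hs : s ∈ Φ.eigenspace μ) (hw : w ∈ Φ.eigenspace μ) {a : A} (ha : a • s = w)
    (k : ℕ) : (g ^ k) a • s = w := by
  rw [mem_eigenspace_iff] at hs hw
  induction k with
  | zero => simpa using ha
  | succ k ih =>
    refine hμ.smul_left_cancel.mp ?_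
    calc μ • (g ^ (k + 1)) a • s = g ((g ^ k) a) • Φ s := by
          rw [pow_succ', mul_apply, hs, smul_comm]
      _ = μ • w := by rw [← hΦ, ih, hw]

theorem exists_apply_eq_self_smul_eq_of_mem_eigenspace {p : ℕ} (hp : IsUnit (p : K))
    (hg : g ^ p = 1) (hΦ : ∀ (a : A) (w : W), Φ (a • w) = g a • Φ w)
    (hμ : IsUnit μ) (hs : s ∈ Φ.eigenspace μ) (hw : w ∈ Φ.eigenspace μ)
    {a : A} (ha : a • s = w) : ∃ b : A, g b = b ∧ b • s = w := by
  obtain ⟨c, hc⟩ := hp.exists_left_inv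
  refine ⟨c • ∑ k ∈ Finset.range p, (g ^ k) a, ?_, ?_⟩
  · rw [map_smul, apply_sum_range_pow_apply_of_pow_eq_one hg]
  · calc (c • ∑ k ∈ Finset.range p, (g ^ k) a) • s
        = c • ∑ k ∈ Finset.range p, (g ^ k) a • s := by rw [smul_assoc, Finset.sum_smul]
      _ = c • (p : K) • w := by
          simp only [pow_apply_smul_eq_of_mem_eigenspace hΦ hμ hs hw ha, Finset.sum_const,
            Finset.card_range, Nat.cast_smul_eq_nsmul]
      _ = w := by rw [smul_smul, hc, one_smul]

theorem eq_bot_or_eq_eigenspace_of_smul_mem [IsSimpleModule A W] {p : ℕ} (hp : IsUnit (p : K))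
    (hg : g ^ p = 1) (hΦ : ∀ (a : A) (w : W), Φ (a • w) = g a • Φ w) (hμ : IsUnit μ)
    {S : Submodule K W} (hS : S ≤ Φ.eigenspace μ)
    (hsmul : ∀ a : A, g a = a → ∀ s ∈ S, a • s ∈ S) :
    S = ⊥ ∨ S = Φ.eigenspace μ := by
  refine or_iff_not_imp_left.mpr fun hS_ne_bot => le_antisymm hS fun w hw => ?_
  obtain ⟨s, hs, hs_ne_zero⟩ := S.exists_mem_ne_zero_of_ne_bot hS_ne_bot
  obtain ⟨a, ha⟩ : ∃ a : A, a • s = w := IsSimpleModule.toSpanSingleton_surjective A hs_ne_zero w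
  obtain ⟨b, hb, rfl⟩ := exists_apply_eq_self_smul_eq_of_mem_eigenspace hp hg hΦ hμ (hS hs) hw ha
  exact hsmul b hb s hs

end TwistedIntertwiner

theorem eigenspace_decomposition_of_twist_intertwiner_general
    {K A W : Type*} [Field K] [Ring A] [Algebra K A]
    [AddCommGroup W] [Module K W] [Module A W] [IsScalarTower K A W] [IsSimpleModule A W]
    {p : ℕ} (hp : 0 < p) {ζ : K} (hζ : IsPrimitiveRoot ζ p)
    {g : Module.End K A} (hg : g ^ p = 1) {Φ : Module.End K W}
    (hΦ : ∀ (a : A) (w : W), Φ (a • w) = g a • Φ w) (hΦp : Φ ^ p = 1) :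
    (DirectSum.IsInternal fun j : Fin p => Φ.eigenspace (ζ ^ (j : ℕ))) ∧
    (∀ i j : ℕ, ∀ a : A, g a = ζ ^ i • a →
      ∀ w ∈ Φ.eigenspace (ζ ^ j), a • w ∈ Φ.eigenspace (ζ ^ ((i + j) % p))) ∧
    (∀ j : ℕ, ∀ S : Submodule K W, S ≤ Φ.eigenspace (ζ ^ j) →
      (∀ a : A, g a = a → ∀ s ∈ S, a • s ∈ S) → S = ⊥ ∨ S = Φ.eigenspace (ζ ^ j)) := by
  have : NeZero p := ⟨hp.ne'⟩
  have hpK : IsUnit (p : K) := hζ.neZero'.ne.isUnit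
  refine ⟨isInternal_eigenspace_pow_of_pow_eq_one hp hζ hΦp, fun i j a ha w hw => ?_,
    fun j S hS hsmul =>
      eq_bot_or_eq_eigenspace_of_smul_mem hpK hg hΦ ((hζ.isUnit hp.ne').pow j) hS hsmul⟩
  rw [← pow_eq_pow_mod _ hζ.pow_eq_one, pow_add]
  exact smul_mem_eigenspace_mul hΦ (mem_eigenspace_iff.mpr ha) hw

theorem isPrimitiveRoot_primRoot {p : ℕ} (hp : p ≠ 0) : IsPrimitiveRoot (primRoot p) p :=
  Complex.isPrimitiveRoot_exp p hp

theorem eigenSp_eq_eigenspace {W : Type*} [AddCommGroup W] [Module ℂ W] (Φ : W →ₗ[ℂ] W)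
    (p j : ℕ) : eigenSp Φ p j = Module.End.eigenspace Φ (primRoot p ^ j) :=
  eigenspace_def.symm

/-- With `g^p = id`, `W` simple over `A`, and `Φ` a `ℂ`-linear bijection
with `Φ(a·w) = g(a)·Φ(w)` and `Φ^p = id`: (1) `W = W^0 ⊕ ⋯ ⊕ W^{p−1}` for the eigenspaces
`W^j = ker(Φ − ζ^j·id)`; (2) `A^i·W^j ⊆ W^{(i+j) mod p}` where `A^i = {a : g(a) = ζ^i·a}`;
(3) every nonzero `W^j` is simple over the fixed subalgebra `A^g` (i.e. the only
`A^g`-stable subspaces of `W^j` are `0` and `W^j`). -/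
theorem eigenspace_decomposition_of_twist_intertwiner
    (A : Type*) [Ring A] [Algebra ℂ A]
    (p : ℕ) (hp : 1 ≤ p)
    (g : A ≃ₐ[ℂ] A) (hg : g ^ p = 1)
    (W : Type*) [AddCommGroup W] [Module ℂ W] [Module A W] [IsScalarTower ℂ A W]
    (hW : IsSimpleModule A W)
    (Φ : W →ₗ[ℂ] W) (hbij : Function.Bijective Φ)
    (hcomm : ∀ (a : A) (w : W), Φ (a • w) = g a • Φ w)
    (hΦp : Φ ^ p = (1 : W →ₗ[ℂ] W)) :
    (DirectSum.IsInternal fun j : Fin p => eigenSp Φ p (j : ℕ)) ∧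
    (∀ i j : Fin p, ∀ a : A, g a = (primRoot p) ^ (i : ℕ) • a →
      ∀ w ∈ eigenSp Φ p (j : ℕ), a • w ∈ eigenSp Φ p (((i : ℕ) + (j : ℕ)) % p)) ∧
    (∀ j : Fin p, eigenSp Φ p (j : ℕ) ≠ ⊥ →
      ∀ S : Submodule ℂ W, S ≤ eigenSp Φ p (j : ℕ) →
        (∀ a : A, g a = a → ∀ s ∈ S, a • s ∈ S) →
        S = ⊥ ∨ S = eigenSp Φ p (j : ℕ)) := by
  simp only [eigenSp_eq_eigenspace]
  have hgp : g.toLinearMap ^ p = 1 := by rw [← g.pow_toLinearMap, hg]; rfl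
  obtain ⟨hinternal, hgraded, hsimple⟩ := eigenspace_decomposition_of_twist_intertwiner_general
    hp (isPrimitiveRoot_primRoot (by lia)) hgp hcomm hΦp
  exact ⟨hinternal, fun i j => hgraded i j, fun j _ => hsimple j⟩
end

section
/- Let A be a unital associative algebra over ℂ, p ≥ 1, and g a ℂ-algebra automorphism of A with g^p = id. Let W be a simple left A-module of at most countable complex dimension such that W is isomorphic to the twisted module W∘g as an A-module. Then W, regarded as a module over the fixed subalgebra A^g = {a ∈ A : g(a) = a}, is completely reducible: W decomposes as a direct sum of at most p simple A^g-submodules, and these simple summands are pairwise non-isomorphic as A^g-modules. -/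
/-!
By Dixmier's form of Schur's lemma every `A`-endomorphism of `W` is a scalar: an endomorphism that
is transcendental over `ℂ` would embed `ℂ(X)`, of dimension `2^ℵ₀`, into `W`. Hence an isomorphism
`W ≅ W ∘ g` can be rescaled to some `σ` with `σ ^ p = 1`, and `W` is the direct sum of the
eigenspaces of `σ`, which are `A^g`-submodules. If `w` and `a • w` are eigenvectors of `σ` for the
same nonzero eigenvalue, then `g a • w = a • w`, so averaging `a` over the powers of `g` gives an
element of `A^g` acting on `w` as `a` does. Applied to simplicity of `W`, this makes the eigenspaces
simple; applied to the density theorem, it makes them pairwise non-isomorphic.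
-/

open Module Polynomial

section Schur

open scoped nonZeroDivisors

universe u v

variable {K : Type u} [Field K]

theorem nonempty_algHom_fractionRing_of_transcendental {D : Type v} [DivisionRing D] [Algebra K D]
    {x : D} (hx : Transcendental K x) : Nonempty (FractionRing K[X] →ₐ[K] D) := by
  have isUnit_aeval (q : K[X]⁰) : IsUnit (aeval x (q : K[X])) :=
    ((map_ne_zero_iff _ (transcendental_iff_injective.mp hx)).mpr
      (nonZeroDivisors.coe_ne_zero q)).isUnit
  -- `IsLocalization.lift` needs a commutative target; the Ore localization does not.
  let φ : FractionRing K[X] →+* D := OreLocalization.universalHom (aeval x).toRingHom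
    (IsUnit.liftRight ((aeval x : K[X] →ₐ[K] D).toMonoidHom.comp K[X]⁰.subtype) isUnit_aeval)
    fun _ => rfl
  refine ⟨{ φ with commutes' := fun c => ?_ }⟩
  calc φ (algebraMap K[X] (FractionRing K[X]) (C c))
      = aeval x (C c) := OreLocalization.universalHom_commutes _ _ _
    _ = algebraMap K D c := aeval_C x c

variable (K) in
theorem cardinalMk_le_rank_fractionRing_polynomial :
    Cardinal.mk K ≤ Module.rank K (FractionRing K[X]) := by
  have transcendental_X : Transcendental K (algebraMap K[X] (FractionRing K[X]) X) :=
    (transcendental_algebraMap_iff (IsFractionRing.injective _ _)).mpr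
      (Polynomial.transcendental_X K)
  exact transcendental_X.linearIndependent_sub_inv.cardinal_le_rank

theorem isAlgebraic_of_rank_lt_cardinalMk {D : Type v} [DivisionRing D] [Algebra K D]
    (hD : Cardinal.lift.{u} (Module.rank K D) < Cardinal.lift.{v} (Cardinal.mk K)) :
    Algebra.IsAlgebraic K D := by
  refine ⟨fun x => of_not_not fun hx => hD.not_ge ?_⟩
  obtain ⟨φ⟩ := nonempty_algHom_fractionRing_of_transcendental hx
  exact (Cardinal.lift_le.mpr (cardinalMk_le_rank_fractionRing_polynomial K)).trans
    (LinearMap.lift_rank_le_of_injective φ.toLinearMap φ.toRingHom.injective)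

variable {A : Type*} [Ring A] [Algebra K A]
  {W : Type v} [AddCommGroup W] [Module K W] [Module A W] [IsScalarTower K A W]

theorem rank_end_le_of_isSimpleModule [IsSimpleModule A W] :
    Module.rank K (End A W) ≤ Module.rank K W := by
  have := IsSimpleModule.nontrivial A W
  obtain ⟨w, hw⟩ := exists_ne (0 : W)
  refine LinearMap.rank_le_of_injective (LinearMap.applyₗ' K w : End A W →ₗ[K] W) ?_
  refine (injective_iff_map_eq_zero _).mpr fun T hT => of_not_not fun hT0 => hw ?_
  exact (LinearMap.bijective_of_ne_zero hT0).injective (hT.trans (map_zero T).symm)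

theorem algebraMap_end_surjective_of_rank_lt_cardinalMk [IsAlgClosed K] [IsSimpleModule A W]
    (hW : Cardinal.lift.{u} (Module.rank K W) < Cardinal.lift.{v} (Cardinal.mk K)) :
    Function.Surjective (algebraMap K (End A W)) := by
  classical
  have : Algebra.IsAlgebraic K (End A W) := isAlgebraic_of_rank_lt_cardinalMk <|
    (Cardinal.lift_le.mpr rank_end_le_of_isSimpleModule).trans_lt hW
  exact IsAlgClosed.algebraMap_bijective_of_isIntegral.surjective

end Schur

section Density

variable {K A W : Type*} [Field K] [Ring A] [Algebra K A]
  [AddCommGroup W] [Module K W] [Module A W] [IsScalarTower K A W]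

theorem exists_smul_eq_of_algebraMap_end_surjective [IsSemisimpleModule A W]
    (hScalar : Function.Surjective (algebraMap K (End A W))) (T : End K W) (s : Finset W) :
    ∃ a : A, ∀ w ∈ s, T w = a • w := by
  refine jacobson_density (R := A) { T with map_smul' := fun S w => ?_ } s
  obtain ⟨c, rfl⟩ := hScalar S
  exact map_smul T c w

theorem exists_smul_eq_self_and_smul_eq_zero [IsSemisimpleModule A W]
    (hScalar : Function.Surjective (algebraMap K (End A W))) {σ : End K W} {μ ν : K}
    (hμν : μ ≠ ν) {w v : W} (hw : σ w = μ • w) (hv : σ v = ν • v) :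
    ∃ a : A, a • w = w ∧ a • v = 0 := by
  classical
  obtain ⟨a, ha⟩ := exists_smul_eq_of_algebraMap_end_surjective hScalar
    ((μ - ν)⁻¹ • (σ - algebraMap K (End K W) ν)) {w, v}
  refine ⟨a, ?_, ?_⟩
  · rw [← ha w (by simp)]
    simp [hw, ← sub_smul, smul_smul, sub_ne_zero.mpr hμν]
  · rw [← ha v (by simp)]
    simp [hv]

end Density

section FiniteOrderEndomorphism

variable {K V : Type*} [Field K] [AddCommGroup V] [Module K V] {σ : End K V}

theorem ker_aeval_prod_X_sub_C_le_iSup_eigenspace (σ : End K V) (s : Finset K) :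
    LinearMap.ker (aeval σ (∏ μ ∈ s, (X - C μ))) ≤ ⨆ μ ∈ s, σ.eigenspace μ := by
  classical
  induction s using Finset.induction_on with
  | empty => simp [Module.End.one_eq_id]
  | insert μ s hμ ih =>
    have coprime : IsCoprime (X - C μ) (∏ ν ∈ s, (X - C ν)) :=
      IsCoprime.prod_right fun ν hν => isCoprime_X_sub_C_of_isUnit_sub
        (sub_ne_zero.mpr (ne_of_mem_of_not_mem hν hμ).symm).isUnit
    rw [Finset.prod_insert hμ, ← sup_ker_aeval_eq_ker_aeval_mul_of_coprime σ coprime,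
      Finset.iSup_insert]
    refine sup_le_sup (fun v hv => ?_) ih
    simpa [sub_eq_zero] using hv

theorem iSup_eigenspace_eq_top_of_pow_eq_one {p : ℕ} (hp : 0 < p) {ζ : K}
    (hζ : IsPrimitiveRoot ζ p) (hσ : σ ^ p = 1) : ⨆ μ, σ.eigenspace μ = ⊤ := by
  have ker_eq_top : LinearMap.ker (aeval σ (∏ μ ∈ nthRootsFinset p (1 : K), (X - C μ))) = ⊤ := by
    simp [← X_pow_sub_one_eq_prod hp hζ, hσ]
  exact top_le_iff.mp <| ker_eq_top.ge.trans <|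
    (ker_aeval_prod_X_sub_C_le_iSup_eigenspace σ _).trans <| iSup_mono fun _ => iSup_const_le

theorem isInternal_eigenspace_of_iSup_eq_top {ι : Type*} [DecidableEq ι] (e : ι ≃ σ.Eigenvalues)
    (hσ : ⨆ μ, σ.eigenspace μ = ⊤) :
    DirectSum.IsInternal fun i => σ.eigenspace (e i : K) := by
  refine DirectSum.isInternal_submodule_of_iSupIndep_of_iSup_eq_top
    (σ.eigenspaces_iSupIndep.comp (Subtype.val_injective.comp e.injective)) ?_
  rw [e.iSup_comp (g := fun μ : σ.Eigenvalues => σ.eigenspace (μ : K)), ← hσ]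
  exact iSup_ne_bot_subtype _

theorem pow_eq_one_of_hasEigenvalue {p : ℕ} (hσ : σ ^ p = 1) {μ : K} (hμ : σ.HasEigenvalue μ) :
    μ ^ p = 1 := by
  obtain ⟨v, hv⟩ := hμ.exists_hasEigenvector
  have pow_smul : μ ^ p • v = (1 : K) • v := by rw [← hv.pow_apply, hσ, End.one_apply, one_smul]
  exact smul_left_injective K hv.2 pow_smul

theorem finite_eigenvalues_and_card_le_of_pow_eq_one {p : ℕ} (hp : 0 < p) (hσ : σ ^ p = 1) :
    Finite σ.Eigenvalues ∧ Nat.card σ.Eigenvalues ≤ p := by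
  classical
  let toRoot (μ : σ.Eigenvalues) : nthRootsFinset p (1 : K) :=
    ⟨μ, (mem_nthRootsFinset hp 1).mpr (pow_eq_one_of_hasEigenvalue hσ μ.2)⟩
  have toRoot_injective : Function.Injective toRoot := fun μ ν h =>
    Subtype.ext (Subtype.mk.inj h)
  refine ⟨Finite.of_injective toRoot toRoot_injective, ?_⟩
  calc Nat.card σ.Eigenvalues
      ≤ Nat.card (nthRootsFinset p (1 : K)) := Nat.card_le_card_of_injective _ toRoot_injective
    _ = (nthRoots p (1 : K)).toFinset.card := by
      rw [Nat.card_eq_finsetCard, nthRootsFinset_def]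
    _ ≤ p := (Multiset.toFinset_card_le _).trans (card_nthRoots p 1)

end FiniteOrderEndomorphism

section Twist

variable {K A W : Type*} [Field K] [Ring A] [Algebra K A]
  [AddCommGroup W] [Module K W] [Module A W] {g : A ≃ₐ[K] A} {p : ℕ}

/-- The subalgebra `A^g` of elements fixed by `g`, over an arbitrary base field; over `ℂ` it is
`fixedSubalgebra g` by definition. -/
abbrev invariantSubalgebra (g : A ≃ₐ[K] A) : Subalgebra K A :=
  AlgHom.equalizer g.toAlgHom (AlgHom.id K A)

/-- The average `(a + g a + ⋯ + g ^ (p - 1) a) / p` of `a` over the powers of `g`, which projects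
`A` onto `A^g` when `g ^ p = 1`; it is meaningful only if `p` is invertible in `K`. -/
noncomputable def cyclicAverage (g : A ≃ₐ[K] A) (p : ℕ) (a : A) : A :=
  (p : K)⁻¹ • ∑ i ∈ Finset.range p, (g ^ i) a

theorem cyclicAverage_mem_invariantSubalgebra (hg : g ^ p = 1) (a : A) :
    cyclicAverage g p a ∈ invariantSubalgebra g := by
  have telescope := Finset.sum_range_sub (fun i => (g ^ i) a) p
  have sum_fixed : g (∑ i ∈ Finset.range p, (g ^ i) a) = ∑ i ∈ Finset.range p, (g ^ i) a := by
    simpa [hg, pow_succ', sub_eq_zero] using telescope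
  change g (cyclicAverage g p a) = cyclicAverage g p a
  rw [cyclicAverage, map_smul, sum_fixed]

/-- `σ` is an `A`-linear map from `W` to the twisted module `W ∘ g`, whose underlying space is
`W`. -/
def IsTwistedLinear (g : A ≃ₐ[K] A) (σ : End K W) : Prop :=
  ∀ (a : A) (w : W), σ (a • w) = g a • σ w

theorem exists_isTwistedLinear_coe_eq [IsScalarTower K A W] (f : W →+ W)
    (hf : ∀ (a : A) (w : W), f (a • w) = g a • f w) :
    ∃ σ : End K W, IsTwistedLinear g σ ∧ ⇑σ = f := by
  have map_smul_base (c : K) (w : W) : f (c • w) = c • f w := by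
    rw [← algebraMap_smul A c w, hf, AlgEquiv.commutes, algebraMap_smul]
  exact ⟨{ f with map_smul' := map_smul_base }, hf, rfl⟩

namespace IsTwistedLinear

variable {σ : End K W} (hσ : IsTwistedLinear g σ)
include hσ

theorem pow (n : ℕ) : IsTwistedLinear (g ^ n) (σ ^ n) := by
  induction n with
  | zero => simp [IsTwistedLinear]
  | succ n ih =>
    intro a w
    rw [pow_succ', pow_succ', End.mul_apply, ih, hσ, End.mul_apply, AlgEquiv.mul_apply]

variable [IsScalarTower K A W]

theorem smul (c : K) : IsTwistedLinear g (c • σ) := fun a w => by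
  rw [LinearMap.smul_apply, hσ, LinearMap.smul_apply, smul_comm]

theorem exists_pow_eq_smul_one (hScalar : Function.Surjective (algebraMap K (End A W)))
    (hg : g ^ p = 1) : ∃ c : K, σ ^ p = c • 1 := by
  obtain ⟨c, hc⟩ := hScalar
    { σ ^ p with map_smul' := fun a w => by simpa [hg] using hσ.pow p a w }
  exact ⟨c, LinearMap.ext fun w => (LinearMap.congr_fun hc w).symm⟩

theorem exists_pow_eq_one [IsSepClosed K] [NeZero (p : K)] [Nontrivial W]
    (hScalar : Function.Surjective (algebraMap K (End A W))) (hg : g ^ p = 1)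
    (hinj : Function.Injective σ) : ∃ τ : End K W, IsTwistedLinear g τ ∧ τ ^ p = 1 := by
  obtain ⟨c, hc⟩ := hσ.exists_pow_eq_smul_one hScalar hg
  have hc0 : c ≠ 0 := by
    rintro rfl
    obtain ⟨w, hw⟩ := exists_ne (0 : W)
    have pow_injective : Function.Injective (σ ^ p) := End.coe_pow σ p ▸ hinj.iterate p
    exact hw (pow_injective (by simp [hc]))
  obtain ⟨b, hb⟩ := IsSepClosed.exists_pow_nat_eq c p
  refine ⟨b⁻¹ • σ, hσ.smul b⁻¹, ?_⟩
  rw [_root_.smul_pow, hc, smul_smul, inv_pow, hb, inv_mul_cancel₀ hc0, one_smul]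

/-- The eigenspace of `σ` for the eigenvalue `μ`, as a module over the fixed subalgebra. -/
def eigenSubmodule (μ : K) : Submodule (invariantSubalgebra g) W where
  __ := (σ.eigenspace μ).toAddSubmonoid
  smul_mem' := by
    rintro ⟨a, ha : g a = a⟩ w hw
    have hw : σ w = μ • w := End.mem_eigenspace_iff.mp hw
    refine End.mem_eigenspace_iff.mpr ?_
    change σ (a • w) = μ • a • w
    rw [hσ, ha, hw, smul_comm]

theorem mem_eigenSubmodule {μ : K} {w : W} : w ∈ hσ.eigenSubmodule μ ↔ σ w = μ • w :=
  End.mem_eigenspace_iff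

theorem pow_smul_eq_smul {μ : K} (hμ : μ ≠ 0) {a : A} {w : W} (hw : σ w = μ • w)
    (haw : σ (a • w) = μ • a • w) (i : ℕ) : (g ^ i) a • w = a • w := by
  induction i with
  | zero => simp
  | succ i ih =>
    have twisted := hσ ((g ^ i) a) w
    rw [ih, haw, hw, smul_comm (g _) μ w] at twisted
    rw [pow_succ', AlgEquiv.mul_apply]
    exact (smul_right_injective W hμ twisted).symm

theorem cyclicAverage_smul_eq_smul [NeZero (p : K)] {μ : K} (hμ : μ ≠ 0) {a : A} {w : W}
    (hw : σ w = μ • w) (haw : σ (a • w) = μ • a • w) : cyclicAverage g p a • w = a • w := by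
  rw [cyclicAverage, smul_assoc, Finset.sum_smul,
    Finset.sum_congr rfl fun i _ => hσ.pow_smul_eq_smul hμ hw haw i, Finset.sum_const,
    Finset.card_range, ← Nat.cast_smul_eq_nsmul K, inv_smul_smul₀ (NeZero.ne (p : K))]

theorem isSimpleModule_eigenSubmodule [NeZero (p : K)] [IsSimpleModule A W] (hg : g ^ p = 1)
    {μ : K} (hμ0 : μ ≠ 0) (hμ : σ.HasEigenvalue μ) :
    IsSimpleModule (invariantSubalgebra g) (hσ.eigenSubmodule μ) := by
  rw [isSimpleModule_iff_toSpanSingleton_surjective]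
  constructor
  · obtain ⟨w, hw, hw0⟩ := hμ.exists_hasEigenvector
    exact ⟨⟨w, hw⟩, 0, fun h => hw0 (congrArg Subtype.val h)⟩
  · rintro ⟨w, hw⟩ hw0 ⟨v, hv⟩
    obtain ⟨a, rfl : a • w = v⟩ :=
      IsSimpleModule.toSpanSingleton_surjective A (fun h => hw0 (Subtype.ext h)) v
    rw [mem_eigenSubmodule] at hw hv
    exact ⟨⟨cyclicAverage g p a, cyclicAverage_mem_invariantSubalgebra hg a⟩,
      Subtype.ext (hσ.cyclicAverage_smul_eq_smul hμ0 hw hv)⟩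

theorem linearMap_eigenSubmodule_eq_zero [NeZero (p : K)] [IsSemisimpleModule A W]
    (hScalar : Function.Surjective (algebraMap K (End A W))) (hg : g ^ p = 1)
    {μ ν : K} (hμ : μ ≠ 0) (hν : ν ≠ 0) (hμν : μ ≠ ν)
    (φ : hσ.eigenSubmodule μ →ₗ[invariantSubalgebra g] hσ.eigenSubmodule ν) : φ = 0 := by
  ext w
  have hw : σ w = μ • (w : W) := hσ.mem_eigenSubmodule.mp w.2
  have hφw : σ (φ w) = ν • (φ w : W) := hσ.mem_eigenSubmodule.mp (φ w).2
  obtain ⟨a, haw, haφw⟩ := exists_smul_eq_self_and_smul_eq_zero (A := A) hScalar hμν hw hφw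
  let a₀ : invariantSubalgebra g :=
    ⟨cyclicAverage g p a, cyclicAverage_mem_invariantSubalgebra hg a⟩
  have smul_w : a₀ • w = w := Subtype.ext <|
    (hσ.cyclicAverage_smul_eq_smul hμ hw (by rw [haw, hw])).trans haw
  have smul_φw : a₀ • φ w = 0 := Subtype.ext <|
    (hσ.cyclicAverage_smul_eq_smul hν hφw (by simp [haφw])).trans haφw
  rw [← smul_w, map_smul, smul_φw, LinearMap.zero_apply]

theorem isEmpty_eigenSubmodule_linearEquiv [NeZero (p : K)] [IsSemisimpleModule A W]
    (hScalar : Function.Surjective (algebraMap K (End A W))) (hg : g ^ p = 1)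
    {μ ν : K} (hμ0 : μ ≠ 0) (hν0 : ν ≠ 0) (hμν : μ ≠ ν) (hμ : σ.HasEigenvalue μ) :
    IsEmpty (hσ.eigenSubmodule μ ≃ₗ[invariantSubalgebra g] hσ.eigenSubmodule ν) := by
  refine ⟨fun φ => ?_⟩
  obtain ⟨w, hw, hw0⟩ := hμ.exists_hasEigenvector
  have φ_eq_zero := hσ.linearMap_eigenSubmodule_eq_zero hScalar hg hμ0 hν0 hμν φ
  have w_eq_zero : (⟨w, hw⟩ : hσ.eigenSubmodule μ) = 0 :=
    φ.map_eq_zero_iff.mp (LinearMap.congr_fun φ_eq_zero _)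
  exact hw0 (congrArg Subtype.val w_eq_zero)

end IsTwistedLinear

end Twist

theorem complete_reducibility_over_fixed_subalgebra_general
    {K A W : Type*} [Field K] [IsSepClosed K] [Ring A] [Algebra K A]
    [AddCommGroup W] [Module K W] [Module A W] [IsScalarTower K A W] [IsSimpleModule A W]
    (hScalar : Function.Surjective (algebraMap K (End A W)))
    {p : ℕ} (hp : (p : K) ≠ 0) {g : A ≃ₐ[K] A} (hg : g ^ p = 1)
    (hiso : ∃ f : W ≃+ W, ∀ (a : A) (w : W), f (a • w) = g a • f w) :
    ∃ k : ℕ, k ≤ p ∧ ∃ N : Fin k → Submodule (invariantSubalgebra g) W,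
      DirectSum.IsInternal N ∧
      (∀ i, IsSimpleModule (invariantSubalgebra g) (N i)) ∧
      (∀ i j, i ≠ j → IsEmpty ((N i) ≃ₗ[invariantSubalgebra g] (N j))) := by
  have : NeZero (p : K) := ⟨hp⟩
  have : NeZero p := .of_neZero_natCast K
  have := IsSimpleModule.nontrivial A W
  obtain ⟨f, hf⟩ := hiso
  obtain ⟨F, hF, hFf⟩ := exists_isTwistedLinear_coe_eq f.toAddMonoidHom hf
  obtain ⟨σ, hσ, hσp⟩ := hF.exists_pow_eq_one hScalar hg (hFf ▸ f.injective)
  obtain ⟨ζ, hζ⟩ := HasEnoughRootsOfUnity.exists_primitiveRoot K p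
  obtain ⟨_, card_le⟩ := finite_eigenvalues_and_card_le_of_pow_eq_one (NeZero.pos p) hσp
  let e : Fin (Nat.card σ.Eigenvalues) ≃ σ.Eigenvalues := (Finite.equivFin _).symm
  have ne_zero (i) : (e i : K) ≠ 0 :=
    (IsUnit.of_pow_eq_one (pow_eq_one_of_hasEigenvalue hσp (e i).2) (NeZero.ne p)).ne_zero
  refine ⟨_, card_le, fun i => hσ.eigenSubmodule (e i : K), ?_, fun i => ?_, fun i j hij => ?_⟩
  · exact isInternal_eigenspace_of_iSup_eq_top e
      (iSup_eigenspace_eq_top_of_pow_eq_one (NeZero.pos p) hζ hσp)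
  · exact hσ.isSimpleModule_eigenSubmodule hg (ne_zero i) (e i).2
  · exact hσ.isEmpty_eigenSubmodule_linearEquiv hScalar hg (ne_zero i) (ne_zero j)
      (fun h => hij (e.injective (Subtype.ext h))) (e i).2

/-- If `g^p = id`, `W` is a simple `A`-module of at most countable complex
dimension and `W ≅ W ∘ g`, then as an `A^g`-module `W` is completely reducible: it is an
internal direct sum of at most `p` simple `A^g`-submodules that are pairwise non-isomorphic. -/
theorem complete_reducibility_over_fixed_subalgebra
    (A : Type*) [Ring A] [Algebra ℂ A]
    (p : ℕ) (hp : 1 ≤ p)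
    (g : A ≃ₐ[ℂ] A) (hg : g ^ p = 1)
    (W : Type*) [AddCommGroup W] [Module ℂ W] [Module A W] [IsScalarTower ℂ A W]
    (hW : IsSimpleModule A W)
    (hcount : Module.rank ℂ W ≤ Cardinal.aleph0)
    (hiso : ∃ f : W ≃+ W, ∀ (a : A) (w : W), f (a • w) = g a • f w) :
    ∃ k : ℕ, k ≤ p ∧ ∃ N : Fin k → Submodule (fixedSubalgebra g) W,
      DirectSum.IsInternal N ∧
      (∀ i, IsSimpleModule (fixedSubalgebra g) (N i)) ∧
      (∀ i j, i ≠ j → IsEmpty ((N i) ≃ₗ[fixedSubalgebra g] (N j))) := by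
  have rank_lt := hcount.trans_lt Cardinal.aleph0_lt_continuum
  exact complete_reducibility_over_fixed_subalgebra_general
    (algebraMap_end_surjective_of_rank_lt_cardinalMk (by simpa using rank_lt))
    (Nat.cast_ne_zero.mpr (Nat.one_le_iff_ne_zero.mp hp)) hg hiso
end

section
/- Let A be a unital associative algebra over ℂ and x ∈ A such that the commutator map ad x : a ↦ xa − ax is locally nilpotent on A (for every a ∈ A there is k with (ad x)^k(a) = 0). Let W be a left A-module generated by a single element w satisfying x·w = λ·w for some λ ∈ ℂ. Then for every v ∈ W there exists k ≥ 0 such that (x − λ·1)^k · v = 0. -/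
section CentralEigenvector

variable {A W : Type*} [Ring A] [AddCommGroup W] [Module A W] {x z : A} {w : W}

theorem lie_smul_eq_sub_smul_smul {a : A} (hza : Commute z a) (hw : x • w = z • w) :
    ⁅x, a⁆ • w = (x - z) • a • w :=
  calc ⁅x, a⁆ • w = x • a • w - a • x • w := by
        rw [Ring.lie_def, sub_smul, mul_smul, mul_smul]
    _ = x • a • w - z • a • w := by rw [hw, ← mul_smul a z, ← hza.eq, mul_smul]
    _ = (x - z) • a • w := (sub_smul x z (a • w)).symm

theorem semiconj_smul_lie_sub_smul (hz : z ∈ Set.center A) (hw : x • w = z • w) :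
    Function.Semiconj (fun a : A ↦ a • w) (fun a ↦ ⁅x, a⁆) (fun v ↦ (x - z) • v) :=
  fun a ↦ lie_smul_eq_sub_smul_smul (hz.comm a) hw

theorem lie_iterate_smul_eq_sub_pow_smul_smul (hz : z ∈ Set.center A) (hw : x • w = z • w)
    (k : ℕ) (a : A) : (fun b : A ↦ ⁅x, b⁆)^[k] a • w = (x - z) ^ k • a • w := by
  simpa only [smul_iterate] using (semiconj_smul_lie_sub_smul hz hw).iterate_right k a

theorem locally_nilpotent_action_on_whittaker_cyclic_module_general
    (hx : ∀ a : A, ∃ k : ℕ, (fun b : A ↦ ⁅x, b⁆)^[k] a = 0) (hz : z ∈ Set.center A)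
    (hw : x • w = z • w) {v : W} (hv : v ∈ Submodule.span A {w}) :
    ∃ k : ℕ, (x - z) ^ k • v = 0 := by
  obtain ⟨a, rfl⟩ := Submodule.mem_span_singleton.mp hv
  obtain ⟨k, hk⟩ := hx a
  exact ⟨k, by rw [← lie_iterate_smul_eq_sub_pow_smul_smul hz hw, hk, zero_smul]⟩

end CentralEigenvector

/-- Let `x ∈ A` with `ad x` locally nilpotent on the `ℂ`-algebra `A`, and
let `W = A·w` be a cyclic `A`-module with `x·w = λ·w`. Then `x − λ·1` acts locally
nilpotently on `W`. -/
theorem locally_nilpotent_action_on_whittaker_cyclic_module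
    (A : Type*) [Ring A] [Algebra ℂ A] (x : A)
    (hx : ∀ a : A, ∃ k : ℕ, (fun b : A => x * b - b * x)^[k] a = 0)
    (W : Type*) [AddCommGroup W] [Module A W]
    (w : W) (hgen : Submodule.span A {w} = ⊤)
    (c : ℂ) (hw : x • w = algebraMap ℂ A c • w) :
    ∀ v : W, ∃ k : ℕ, ((x - algebraMap ℂ A c) ^ k) • v = 0 :=
  fun _ ↦ locally_nilpotent_action_on_whittaker_cyclic_module_general hx
    (Set.algebraMap_mem_center c) hw (hgen ▸ Submodule.mem_top)
end

section
/- Let L be a Lie algebra over ℂ and 𝔫 ⊆ L a Lie subalgebra such that for every x ∈ 𝔫 the map ad x is locally nilpotent on L. Let λ : 𝔫 → ℂ be a Whittaker function, i.e., a ℂ-linear map with λ(⁅x,y⁆) = 0 for all x, y ∈ 𝔫. Let W be a U(L)-module generated by a vector w satisfying ι(x)·w = λ(x)·w for all x ∈ 𝔫. Then for every x ∈ 𝔫 and every v ∈ W there exists k ≥ 0 such that (ι(x) − λ(x)·1)^k · v = 0. -/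
/-!
Fix `x ∈ 𝔫`. Since `ι x * ι y = ι ⁅x, y⁆ + ι y * ι x` and `ad x` is locally nilpotent, acting by
any `ι y` preserves the generalized `λ(x)`-eigenspace of `ι x` on `W`. The elements `ι y` generate
`U(L)`, so this eigenspace is a `U(L)`-submodule; containing `w`, it is all of `W`.
-/

section EnvelopingAlgebra

attribute [local instance 100] LieRing.ofAssociativeRing

open UniversalEnvelopingAlgebra

variable {R : Type*} [CommRing R] {L : Type*} [LieRing L] [LieAlgebra R L]

variable (R L) in
theorem adjoin_range_universalEnvelopingAlgebra_ι :
    Algebra.adjoin R (Set.range (ι R : L → UniversalEnvelopingAlgebra R L)) = ⊤ := by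
  have mkAlgHom_surjective : Function.Surjective (mkAlgHom R L) := RingCon.mkₐ_surjective _
  have range_ι : Set.range (ι R : L → UniversalEnvelopingAlgebra R L) =
      mkAlgHom R L '' Set.range (TensorAlgebra.ι R) := by
    rw [← Set.range_comp]
    rfl
  rw [range_ι, ← AlgHom.map_adjoin, TensorAlgebra.adjoin_range_ι, Algebra.map_top,
    AlgHom.range_eq_top]
  exact mkAlgHom_surjective

section AssociativeAlgebra

variable {A : Type*} [Ring A] [Algebra R A]
  {M : Type*} [AddCommGroup M] [Module R M] [Module A M] [IsScalarTower R A M]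

theorem smul_mem_of_mem_adjoin {s : Set A} {P : Submodule R M}
    (hs : ∀ a ∈ s, ∀ m ∈ P, a • m ∈ P) {a : A} (ha : a ∈ Algebra.adjoin R s) :
    ∀ m ∈ P, a • m ∈ P := by
  induction ha using Algebra.adjoin_induction with
  | mem a ha => exact hs a ha
  | algebraMap r =>
    intro m hm
    rw [algebraMap_smul]
    exact P.smul_mem r hm
  | add a b _ _ iha ihb =>
    intro m hm
    rw [add_smul]
    exact P.add_mem (iha m hm) (ihb m hm)
  | mul a b _ _ iha ihb =>
    intro m hm
    rw [mul_smul]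
    exact iha _ (ihb m hm)

theorem eq_top_of_adjoin_eq_top_of_span_eq_top {s : Set A} (hs : Algebra.adjoin R s = ⊤)
    {S : Set M} (hS : Submodule.span A S = ⊤) {P : Submodule R M} (hSP : S ⊆ P)
    (hsP : ∀ a ∈ s, ∀ m ∈ P, a • m ∈ P) : P = ⊤ := by
  refine P.eq_top_iff'.mpr fun m => ?_
  induction (hS ▸ Submodule.mem_top : m ∈ Submodule.span A S) using Submodule.span_induction with
  | mem m hm => exact hSP hm
  | zero => exact P.zero_mem
  | add _ _ _ _ ihm ihn => exact P.add_mem ihm ihn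
  | smul a m _ ihm => exact smul_mem_of_mem_adjoin hsP (hs ▸ Algebra.mem_top) m ihm

theorem mem_maxGenEigenspace_lsmul_iff {a : A} {c : R} {m : M} :
    m ∈ (Algebra.lsmul R R M a).maxGenEigenspace c ↔
      ∃ k : ℕ, (a - algebraMap R A c) ^ k • m = 0 := by
  have lsmul_sub : Algebra.lsmul R R M a - c • 1 = Algebra.lsmul R R M (a - algebraMap R A c) := by
    rw [map_sub, AlgHom.commutes, Algebra.algebraMap_eq_smul_one]
  simp only [Module.End.mem_maxGenEigenspace, lsmul_sub, ← map_pow, Algebra.lsmul_apply]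

theorem lieHom_smul_mem_maxGenEigenspace (f : L →ₗ⁅R⁆ A) {x y : L} {b c : R} {m : M}
    (hy : y ∈ (LieAlgebra.ad R L x).maxGenEigenspace b)
    (hm : m ∈ (Algebra.lsmul R R M (f x)).maxGenEigenspace c) :
    f y • m ∈ (Algebra.lsmul R R M (f x)).maxGenEigenspace (b + c) := by
  let : LieRingModule A M := LieRingModule.ofAssociativeModule
  have : LieModule R A M := LieModule.ofAssociativeModule
  let : LieRingModule L M := LieRingModule.compLieHom M f
  have : LieModule R L M := LieModule.compLieHom M f
  have toEnd_eq_lsmul : LieModule.toEnd R L M x = Algebra.lsmul R R M (f x) := rfl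
  rw [← toEnd_eq_lsmul] at hm ⊢
  exact LieModule.lie_mem_maxGenEigenspace_toEnd hy hm

theorem maxGenEigenspace_lsmul_lieHom_eq_top {f : L →ₗ⁅R⁆ A}
    (hf : Algebra.adjoin R (Set.range f) = ⊤) {x : L} {c : R}
    (hx : (LieAlgebra.ad R L x).maxGenEigenspace 0 = ⊤)
    {S : Set M} (hS : Submodule.span A S = ⊤)
    (hSc : S ⊆ (Algebra.lsmul R R M (f x)).maxGenEigenspace c) :
    (Algebra.lsmul R R M (f x)).maxGenEigenspace c = ⊤ := by
  refine eq_top_of_adjoin_eq_top_of_span_eq_top hf hS hSc ?_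
  rintro _ ⟨y, rfl⟩ m hm
  have hy : y ∈ (LieAlgebra.ad R L x).maxGenEigenspace 0 := hx ▸ Submodule.mem_top
  simpa only [zero_add] using lieHom_smul_mem_maxGenEigenspace f hy hm

end AssociativeAlgebra

variable (R) in
theorem maxGenEigenspace_ad_zero_eq_top_iff {x : L} :
    (LieAlgebra.ad R L x).maxGenEigenspace 0 = ⊤ ↔
      ∀ y : L, ∃ k : ℕ, (fun z : L => ⁅x, z⁆)^[k] y = 0 := by
  simp only [Submodule.eq_top_iff', Module.End.mem_maxGenEigenspace, zero_smul, sub_zero,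
    Module.End.pow_apply]
  rfl

theorem whittaker_module_locally_nilpotent_description_general
    {W : Type*} [AddCommGroup W] [Module (UniversalEnvelopingAlgebra R L) W]
    {x : L} (hx : ∀ y : L, ∃ k : ℕ, (fun z : L => ⁅x, z⁆)^[k] y = 0) {c : R}
    {S : Set W} (hS : Submodule.span (UniversalEnvelopingAlgebra R L) S = ⊤)
    (hSc : ∀ w ∈ S, ∃ k : ℕ,
      (ι R x - algebraMap R (UniversalEnvelopingAlgebra R L) c) ^ k • w = 0) (v : W) :
    ∃ k : ℕ, (ι R x - algebraMap R (UniversalEnvelopingAlgebra R L) c) ^ k • v = 0 := by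
  let : Module R W := Module.compHom W (algebraMap R (UniversalEnvelopingAlgebra R L))
  have : IsScalarTower R (UniversalEnvelopingAlgebra R L) W :=
    IsScalarTower.of_algebraMap_smul fun _ _ => rfl
  have eigenspace_eq_top : (Algebra.lsmul R R W (ι R x)).maxGenEigenspace c = ⊤ :=
    maxGenEigenspace_lsmul_lieHom_eq_top (adjoin_range_universalEnvelopingAlgebra_ι R L)
      ((maxGenEigenspace_ad_zero_eq_top_iff R).mpr hx) hS
      fun w hw => mem_maxGenEigenspace_lsmul_iff.mpr (hSc w hw)
  exact mem_maxGenEigenspace_lsmul_iff.mp (eigenspace_eq_top ▸ Submodule.mem_top)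

end EnvelopingAlgebra

/-- Let `𝔫 ⊆ L` be a Lie subalgebra acting ad-locally-nilpotently on `L`,
`λ : 𝔫 → ℂ` a Whittaker function, and `W` a Whittaker `U(L)`-module of type `λ` (generated
by `w` with `ι(x)·w = λ(x)·w` for `x ∈ 𝔫`). Then for every `x ∈ 𝔫`, the operator
`ι(x) − λ(x)·1` acts locally nilpotently on `W`. -/
theorem whittaker_module_locally_nilpotent_description
    (L : Type*) [LieRing L] [LieAlgebra ℂ L]
    (N : LieSubalgebra ℂ L)
    (hnil : ∀ x : N, ∀ y : L, ∃ k : ℕ, (fun z : L => ⁅(x : L), z⁆)^[k] y = 0)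
    (lam : N →ₗ[ℂ] ℂ) (hlam : ∀ x y : N, lam ⁅x, y⁆ = 0)
    (W : Type*) [AddCommGroup W] [Module (UniversalEnvelopingAlgebra ℂ L) W]
    (w : W) (hgen : Submodule.span (UniversalEnvelopingAlgebra ℂ L) {w} = ⊤)
    (hw : ∀ x : N, UniversalEnvelopingAlgebra.ι ℂ (x : L) • w =
      algebraMap ℂ (UniversalEnvelopingAlgebra ℂ L) (lam x) • w) :
    ∀ x : N, ∀ v : W, ∃ k : ℕ,
      ((UniversalEnvelopingAlgebra.ι ℂ (x : L) -
        algebraMap ℂ (UniversalEnvelopingAlgebra ℂ L) (lam x)) ^ k) • v = 0 := by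
  exact fun x => whittaker_module_locally_nilpotent_description_general (hnil x) hgen <| by
    rintro _ rfl
    exact ⟨1, by rw [pow_one, sub_smul, hw, sub_self]⟩
end

section
/- Let L be a Lie algebra over ℂ and 𝔫 ⊆ L a Lie subalgebra such that for every x ∈ 𝔫 the map ad x is locally nilpotent on L. Let λ₁, …, λ_t : 𝔫 → ℂ be pairwise distinct Whittaker functions, and for each i let W_i be a simple U(L)-module that is a Whittaker module of type λ_i. Then for any choice of nonzero elements w_i ∈ W_i, the element (w₁, …, w_t) generates the direct sum W₁ ⊕ ⋯ ⊕ W_t as a U(L)-module. -/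
/-!
If `W` is a Whittaker module of type `lam`, then `ι x - lam x` is locally nilpotent on
`W` for every `x ∈ 𝔫`: it kills the Whittaker vector, and the vectors killed by one of its powers
are stable under `L` because `ad x` is locally nilpotent. For two types that differ at `x`, the
polynomials `(X - lam x) ^ k` and `(X - mu x) ^ l` are coprime, so by Bézout some polynomial in
`ι x` fixes a given vector of the first module and kills a given vector of the second. Composing
such elements projects a vector of the direct sum onto any one of its components without leaving
the submodule it generates, so that submodule is the sum of those generated by the components.
-/

section GeneralizedKernel

variable {A : Type*} [Ring A] {M : Type*} [AddCommGroup M] [Module A M]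

/-- The generalized kernel of a ring element `a` on an `A`-module `M`, i.e. the vectors killed by
some power of `a`; it is all of `M` precisely when `a` acts locally nilpotently. Since `A` need not
be commutative this is not an `A`-submodule in general, so it is recorded as a `ℤ`-submodule. -/
def generalizedKernel (a : A) (M : Type*) [AddCommGroup M] [Module A M] : Submodule ℤ M :=
  (Module.toModuleEnd ℤ M a).maxGenEigenspace 0

theorem mem_generalizedKernel {a : A} {m : M} :
    m ∈ generalizedKernel a M ↔ ∃ k : ℕ, a ^ k • m = 0 := by
  simp only [generalizedKernel, Module.End.mem_maxGenEigenspace, zero_smul, sub_zero, ← map_pow]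
  rfl

attribute [local instance] LieRing.ofAssociativeRing in
theorem smul_mem_generalizedKernel_of_iterate_lie_eq_zero {a b : A} {k : ℕ}
    (hb : (fun z ↦ ⁅a, z⁆)^[k] b = 0) {m : M} (hm : m ∈ generalizedKernel a M) :
    b • m ∈ generalizedKernel a M := by
  let : LieRingModule A M := LieRingModule.ofAssociativeModule
  have : LieModule ℤ A M := LieModule.ofAssociativeModule
  have hb' : b ∈ (LieModule.toEnd ℤ A A a).maxGenEigenspace 0 := by
    refine (Module.End.mem_maxGenEigenspace _ _ _).2 ⟨k, ?_⟩
    rw [zero_smul, sub_zero, Module.End.pow_apply]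
    exact hb
  have hbm := LieModule.lie_mem_maxGenEigenspace_toEnd hb' (χ₂ := 0) hm
  rwa [zero_add] at hbm

theorem generalizedKernel_eq_top_of_span_singleton_eq_top {R : Type*} [CommRing R] [Algebra R A]
    {s : Set A} (hs : Algebra.adjoin R s = ⊤) {a : A}
    (hnil : ∀ b ∈ s, ∃ k : ℕ, (fun z ↦ ⁅a, z⁆)^[k] b = 0) {v : M}
    (hgen : Submodule.span A {v} = ⊤) (hv : v ∈ generalizedKernel a M) :
    generalizedKernel a M = ⊤ := by
  have smul_mem (b : A) : ∀ m ∈ generalizedKernel a M, b • m ∈ generalizedKernel a M := by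
    have hb : b ∈ Algebra.adjoin R s := hs ▸ Algebra.mem_top
    induction hb using Algebra.adjoin_induction with
    | mem b hb =>
      obtain ⟨k, hk⟩ := hnil b hb
      exact fun m ↦ smul_mem_generalizedKernel_of_iterate_lie_eq_zero hk
    | algebraMap r =>
      have hr : (fun z ↦ ⁅a, z⁆)^[1] (algebraMap R A r) = 0 :=
        sub_eq_zero.2 (Algebra.commutes r a).symm
      exact fun m ↦ smul_mem_generalizedKernel_of_iterate_lie_eq_zero hr
    | add b c _ _ ihb ihc =>
      exact fun m hm ↦ add_smul b c m ▸ add_mem (ihb m hm) (ihc m hm)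
    | mul b c _ _ ihb ihc =>
      exact fun m hm ↦ mul_smul b c m ▸ ihb _ (ihc m hm)
  refine eq_top_iff.2 fun m _ ↦ ?_
  obtain ⟨b, rfl⟩ := (Submodule.span_singleton_eq_top_iff A v).1 hgen m
  exact smul_mem b v hv

theorem exists_smul_eq_self_and_smul_eq_zero_of_isUnit_sub {R : Type*} [CommRing R] [Algebra R A]
    {N : Type*} [AddCommGroup N] [Module A N] {a : A} {c d : R} (hcd : IsUnit (c - d))
    {m : M} (hm : m ∈ generalizedKernel (a - algebraMap R A c) M)
    {n : N} (hn : n ∈ generalizedKernel (a - algebraMap R A d) N) :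
    ∃ u : A, u • m = m ∧ u • n = 0 := by
  obtain ⟨k, hk⟩ := mem_generalizedKernel.1 hm
  obtain ⟨l, hl⟩ := mem_generalizedKernel.1 hn
  obtain ⟨p, q, hpq⟩ :=
    (Polynomial.isCoprime_X_sub_C_of_isUnit_sub hcd).pow (m := k) (n := l)
  have bezout : Polynomial.aeval a p * (a - algebraMap R A c) ^ k +
      Polynomial.aeval a q * (a - algebraMap R A d) ^ l = 1 := by
    simpa using congrArg (Polynomial.aeval a) hpq
  refine ⟨Polynomial.aeval a q * (a - algebraMap R A d) ^ l, ?_, ?_⟩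
  · rw [← eq_sub_iff_add_eq'] at bezout
    rw [bezout, sub_smul, one_smul, mul_smul, hk, smul_zero, sub_zero]
  · rw [mul_smul, hl, smul_zero]

end GeneralizedKernel

section Separation

variable {A : Type*} [Ring A] {I : Type*} {M : I → Type*} [∀ i, AddCommGroup (M i)]
  [∀ i, Module A (M i)]

theorem exists_smul_eq_self_and_forall_mem_smul_eq_zero {M₀ : Type*} [AddCommGroup M₀]
    [Module A M₀] {m₀ : M₀} (s : Finset I)
    (hsep : ∀ j ∈ s, ∀ n : M j, ∃ u : A, u • m₀ = m₀ ∧ u • n = 0) (m : ∀ i, M i) :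
    ∃ u : A, u • m₀ = m₀ ∧ ∀ j ∈ s, u • m j = 0 := by
  classical
  induction s using Finset.induction_on with
  | empty => exact ⟨1, one_smul A m₀, by simp⟩
  | insert j s _ ih =>
    obtain ⟨u, hu₀, hu⟩ := ih fun i hi ↦ hsep i (Finset.mem_insert_of_mem hi)
    -- `u • m j` rather than `m j`: elements of `A` need not commute.
    obtain ⟨u', hu'₀, hu'⟩ := hsep j (Finset.mem_insert_self j s) (u • m j)
    refine ⟨u' * u, by rw [mul_smul, hu₀, hu'₀], Finset.forall_mem_insert _ _ _ |>.2 ⟨?_, ?_⟩⟩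
    · rw [mul_smul, hu']
    · exact fun i hi ↦ by rw [mul_smul, hu i hi, smul_zero]

theorem span_singleton_eq_pi_of_pairwise_separated [Finite I]
    (hsep : ∀ i j, i ≠ j → ∀ (m : M i) (n : M j), ∃ u : A, u • m = m ∧ u • n = 0)
    (m : ∀ i, M i) :
    Submodule.span A {m} = Submodule.pi Set.univ fun i ↦ Submodule.span A {m i} := by
  classical
  have := Fintype.ofFinite I
  apply le_antisymm
  · rw [Submodule.span_singleton_le_iff_mem]
    exact fun i _ ↦ Submodule.mem_span_singleton_self (m i)
  have single_mem (i : I) : Pi.single i (m i) ∈ Submodule.span A {m} := by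
    obtain ⟨u, hui, huj⟩ := exists_smul_eq_self_and_forall_mem_smul_eq_zero (m₀ := m i)
      (Finset.univ.erase i) (fun j hj ↦ hsep i j (Finset.ne_of_mem_erase hj).symm (m i)) m
    refine Submodule.mem_span_singleton.2 ⟨u, funext fun j ↦ ?_⟩
    obtain rfl | hj := eq_or_ne j i
    · simpa using hui
    · simpa [hj] using huj j (by simp [hj])
  rw [← Submodule.iSup_map_single, iSup_le_iff]
  intro i
  rw [Submodule.map_span_le]
  simpa using single_mem i

end Separation

section WhittakerModule

open UniversalEnvelopingAlgebra

attribute [local instance] LieRing.ofAssociativeRing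

variable {R L : Type*} [CommRing R] [LieRing L] [LieAlgebra R L]

variable (R L) in
theorem adjoin_range_ι_eq_top : Algebra.adjoin R (Set.range (ι R : L → _)) = ⊤ := by
  let S := Algebra.adjoin R (Set.range (ι R : L → UniversalEnvelopingAlgebra R L))
  let f : L →ₗ⁅R⁆ S :=
    { toFun y := ⟨ι R y, Algebra.subset_adjoin ⟨y, rfl⟩⟩
      map_add' _ _ := by ext; simp
      map_smul' _ _ := by ext; simp
      map_lie' {_ _} := by ext; simp [LieRing.of_associative_ring_bracket] }
  have val_comp_lift : S.val.comp (lift R f) = AlgHom.id R _ := by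
    ext y
    simp [f]
  refine Algebra.eq_top_iff.2 fun u ↦ ?_
  rw [← AlgHom.id_apply (R := R) u, ← val_comp_lift]
  exact (lift R f u).2

theorem iterate_lie_ι_sub_algebraMap (x y : L) (c : R) (k : ℕ) :
    (fun z ↦ ⁅ι R x - algebraMap R (UniversalEnvelopingAlgebra R L) c, z⁆)^[k] (ι R y) =
      ι R ((fun z ↦ ⁅x, z⁆)^[k] y) := by
  refine ((Function.Semiconj.iterate_right (f := ι R) (fun z ↦ ?_) k) y).symm
  rw [sub_lie, LieHom.map_lie, LieRing.of_associative_ring_bracket (algebraMap R _ c),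
    Algebra.commutes, sub_self, sub_zero]

theorem generalizedKernel_ι_sub_algebraMap_eq_top {W : Type*} [AddCommGroup W]
    [Module (UniversalEnvelopingAlgebra R L) W] {x : L}
    (hnil : ∀ y : L, ∃ k : ℕ, (fun z ↦ ⁅x, z⁆)^[k] y = 0) {v : W}
    (hgen : Submodule.span (UniversalEnvelopingAlgebra R L) {v} = ⊤) {c : R}
    (hv : ι R x • v = algebraMap R (UniversalEnvelopingAlgebra R L) c • v) :
    generalizedKernel (ι R x - algebraMap R (UniversalEnvelopingAlgebra R L) c) W = ⊤ := by
  refine generalizedKernel_eq_top_of_span_singleton_eq_top (adjoin_range_ι_eq_top R L) ?_ hgen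
    (mem_generalizedKernel.2 ⟨1, by rw [pow_one, sub_smul, hv, sub_self]⟩)
  rintro _ ⟨y, rfl⟩
  obtain ⟨k, hk⟩ := hnil y
  exact ⟨k, by rw [iterate_lie_ι_sub_algebraMap, hk, map_zero]⟩

theorem cyclic_vector_in_direct_sum_of_whittaker_modules_general
    {K L : Type*} [Field K] [LieRing L] [LieAlgebra K L] {S : Set L}
    (hnil : ∀ x ∈ S, ∀ y : L, ∃ k : ℕ, (fun z ↦ ⁅x, z⁆)^[k] y = 0)
    {I : Type*} [Finite I] {lam : I → S → K} (hlam : Function.Injective lam)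
    {W : I → Type*} [∀ i, AddCommGroup (W i)]
    [∀ i, Module (UniversalEnvelopingAlgebra K L) (W i)] {v : ∀ i, W i}
    (hgen : ∀ i, Submodule.span (UniversalEnvelopingAlgebra K L) {v i} = ⊤)
    (hv : ∀ i, ∀ x : S, ι K (x : L) • v i =
      algebraMap K (UniversalEnvelopingAlgebra K L) (lam i x) • v i)
    (w : ∀ i, W i) :
    Submodule.span (UniversalEnvelopingAlgebra K L) {w} =
      Submodule.pi Set.univ fun i ↦ Submodule.span (UniversalEnvelopingAlgebra K L) {w i} := by
  have mem_kernel (i : I) (x : S) (m : W i) :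
      m ∈ generalizedKernel (ι K (x : L) - algebraMap K _ (lam i x)) (W i) :=
    generalizedKernel_ι_sub_algebraMap_eq_top (hnil x x.2) (hgen i) (hv i x) ▸ Submodule.mem_top
  refine span_singleton_eq_pi_of_pairwise_separated (fun i j hij m n ↦ ?_) w
  obtain ⟨x, hx⟩ := Function.ne_iff.1 (hlam.ne hij)
  exact exists_smul_eq_self_and_smul_eq_zero_of_isUnit_sub (sub_ne_zero.2 hx).isUnit
    (mem_kernel i x m) (mem_kernel j x n)

end WhittakerModule

/-- For pairwise distinct Whittaker functions `λ₁, …, λ_t` on a Lie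
subalgebra `𝔫 ⊆ L` acting ad-locally-nilpotently on `L`, and simple Whittaker
`U(L)`-modules `W_i` of type `λ_i`, any tuple of nonzero vectors `(w₁, …, w_t)` generates
the direct sum `W₁ ⊕ ⋯ ⊕ W_t` as a `U(L)`-module. -/
theorem cyclic_vector_in_direct_sum_of_whittaker_modules
    (L : Type*) [LieRing L] [LieAlgebra ℂ L]
    (N : LieSubalgebra ℂ L)
    (hnil : ∀ x : N, ∀ y : L, ∃ k : ℕ, (fun z : L => ⁅(x : L), z⁆)^[k] y = 0)
    (t : ℕ) (lam : Fin t → (N →ₗ[ℂ] ℂ))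
    (hlam : ∀ i, ∀ x y : N, lam i ⁅x, y⁆ = 0)
    (hdist : ∀ i j, i ≠ j → lam i ≠ lam j)
    (W : Fin t → Type*) [∀ i, AddCommGroup (W i)]
    [∀ i, Module (UniversalEnvelopingAlgebra ℂ L) (W i)]
    (hsimple : ∀ i, IsSimpleModule (UniversalEnvelopingAlgebra ℂ L) (W i))
    (v : ∀ i, W i)
    (hgen : ∀ i, Submodule.span (UniversalEnvelopingAlgebra ℂ L) {v i} = ⊤)
    (hv : ∀ i, ∀ x : N, UniversalEnvelopingAlgebra.ι ℂ (x : L) • v i =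
      algebraMap ℂ (UniversalEnvelopingAlgebra ℂ L) (lam i x) • v i)
    (w : ∀ i, W i) (hw : ∀ i, w i ≠ 0) :
    Submodule.span (UniversalEnvelopingAlgebra ℂ L) {w} = ⊤ := by
  have span_eq_top (i : Fin t) : Submodule.span (UniversalEnvelopingAlgebra ℂ L) {w i} = ⊤ :=
    have := hsimple i
    IsSimpleModule.span_singleton_eq_top _ (hw i)
  rw [cyclic_vector_in_direct_sum_of_whittaker_modules_general (S := N)
    (fun x hx ↦ hnil ⟨x, hx⟩) (lam := fun i ↦ lam i)
    (fun i j h ↦ of_not_not fun hij ↦ hdist i j hij (DFunLike.coe_injective h)) hgen hv w]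
  simp only [span_eq_top, Submodule.pi_top]
end
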